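/- arXiv:1205.0196 — 3 statements merged into one kernel-verified Lean document; each statement's English description precedes it below -/
import Mathlib

section
/- lim_{Λ→∞} (1/Λ) Σ_{m=1}^{Λ} ( Σ_{q=0}^{Λ} 1/(q+m) )² = 2 (log 2)² + π²/6. -/
/-!
Write `N = Λ + 1` and `a_m = ∑_{q < N} 1/(q+m)`. Comparing `1/k` with increments of `log` gives
`log (1 + N/m) ≤ a_m ≤ log (1 + N/(m-1))`, the upper bound for `m ≥ 2`. With
`f x = log² (1 + 1/x)` this reads `f (m/N) ≤ a_m² ≤ f ((m-1)/N)`, so up to the single term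
`a_1² = O(log² Λ)` the sum is a Riemann sum of the decreasing function `f`, and the limit is
`∫₀¹ f`.

The function `f` has the explicit primitive `F x = x log² (1 + 1/x) - 2 Li₂ (1/(1+x))` on `(0, ∞)`,
continuous up to `0` (`logSqPrim`). By the mean value theorem and the monotonicity of `f`, the
Riemann sums are trapped between telescoping sums of increments of `F`, so no integration theory is
needed. The limit is `F 1 - F 0 = log² 2 - 2 Li₂ (1/2) + 2 Li₂ 1`, which is evaluated by
`Li₂ 1 = π²/6` and Euler's reflection formula at `1/2`, `2 Li₂ (1/2) = π²/6 - log² 2`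
(`dilog_half`).
-/

open Filter

/-! ### The dilogarithm -/

/-- The dilogarithm `Li₂ y = ∑_{n ≥ 1} yⁿ / n²`; meaningful for `|y| ≤ 1`. -/
noncomputable def dilog (y : ℝ) : ℝ := ∑' n : ℕ, y ^ (n + 1) / ((n : ℝ) + 1) ^ 2

lemma hasSum_inv_sq_succ :
    HasSum (fun n : ℕ => 1 / ((n : ℝ) + 1) ^ 2) (Real.pi ^ 2 / 6) := by
  have h := (hasSum_nat_add_iff' 1).2 hasSum_zeta_two
  simpa using h

lemma dilog_one : dilog 1 = Real.pi ^ 2 / 6 := by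
  simpa [dilog] using hasSum_inv_sq_succ.tsum_eq

lemma dilog_zero : dilog 0 = 0 := by simp [dilog]

lemma continuousOn_dilog : ContinuousOn dilog (Set.Icc 0 1) := by
  refine continuousOn_tsum (fun n => by fun_prop) hasSum_inv_sq_succ.summable ?_
  rintro n y ⟨h0, h1⟩
  rw [Real.norm_of_nonneg (by positivity)]
  gcongr
  exact pow_le_one₀ h0 h1

lemma hasDerivAt_dilog {y : ℝ} (h0 : 0 < y) (h1 : y < 1) :
    HasDerivAt dilog (-Real.log (1 - y) / y) y := by
  obtain ⟨r, hyr, hr⟩ := exists_between h1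
  have hy : y ∈ Set.Ioo (-r) r := ⟨by linarith, hyr⟩
  have key := hasDerivAt_tsum_of_isPreconnected (u := fun n : ℕ => r ^ n)
    (g := fun (n : ℕ) (z : ℝ) => z ^ (n + 1) / ((n : ℝ) + 1) ^ 2)
    (g' := fun (n : ℕ) (z : ℝ) => z ^ n / ((n : ℝ) + 1)) (t := Set.Ioo (-r) r)
    (summable_geometric_of_lt_one (by linarith) hr) isOpen_Ioo isPreconnected_Ioo
    (fun n z _ => by
      have h := (hasDerivAt_pow (n + 1) z).div_const (((n : ℝ) + 1) ^ 2)
      refine h.congr_deriv ?_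
      push_cast
      have : (n : ℝ) + 1 ≠ 0 := by positivity
      field_simp)
    (fun n z hz => by
      rw [norm_div, norm_pow, Real.norm_eq_abs, Real.norm_of_nonneg (by positivity)]
      have hz' : |z| ≤ r := abs_le.2 ⟨hz.1.le, hz.2.le⟩
      calc |z| ^ n / ((n : ℝ) + 1) ≤ |z| ^ n :=
            div_le_self (by positivity) (by linarith [Nat.cast_nonneg (α := ℝ) n])
        _ ≤ r ^ n := by gcongr)
    (y₀ := 0) ⟨by linarith, by linarith⟩ (by simp) hy
  refine key.congr_deriv ?_
  have hs := (Real.hasSum_pow_div_log_of_abs_lt_one (x := y)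
    (by rw [abs_of_pos h0]; exact h1)).div_const y
  rw [← hs.tsum_eq]
  congr 1
  ext n
  rw [pow_succ]
  field_simp

/-- The product is continuous at `0`: there `log x * log (1 - x) = O(x log x)`. -/
lemma continuousOn_log_mul_log_one_sub :
    ContinuousOn (fun x : ℝ => Real.log x * Real.log (1 - x)) (Set.Icc 0 (1 / 2)) := by
  rintro x ⟨h0, h1⟩
  rcases h0.eq_or_lt with rfl | h0
  · have h : Tendsto (fun x : ℝ => 2 * |x * Real.log x|) (nhdsWithin 0 (Set.Icc 0 (1 / 2)))
        (nhds 0) := by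
      have : Continuous fun x : ℝ => 2 * |x * Real.log x| :=
        continuous_const.mul Real.continuous_mul_log.abs
      simpa using (this.tendsto 0).mono_left nhdsWithin_le_nhds
    unfold ContinuousWithinAt
    simp only [Real.log_zero, zero_mul]
    refine squeeze_zero_norm' ?_ h
    filter_upwards [self_mem_nhdsWithin] with x hx
    have hx0 := hx.1
    have hx1 := hx.2
    have hlog : |Real.log (1 - x)| ≤ 2 * x := by
      rw [abs_of_nonpos (Real.log_nonpos (by linarith) (by linarith))]
      have h2 := Real.one_sub_inv_le_log_of_pos (x := 1 - x) (by linarith)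
      have h3 : (1 - x)⁻¹ ≤ 1 + 2 * x := by
        rw [inv_le_iff_one_le_mul₀ (by linarith)]
        nlinarith
      linarith
    rw [Real.norm_eq_abs, abs_mul, abs_mul, abs_of_nonneg hx0]
    nlinarith [abs_nonneg (Real.log x)]
  · refine ContinuousAt.continuousWithinAt ?_
    have e1 : x ≠ 0 := h0.ne'
    have e2 : 1 - x ≠ 0 := by linarith
    fun_prop (disch := assumption)

/-- Euler's reflection formula at `1/2`: the function `Li₂ x + Li₂ (1 - x) + log x * log (1 - x)`
has zero derivative on `(0, 1/2)` and equals `Li₂ 1` at `0`. -/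
lemma dilog_half : 2 * dilog (1 / 2) = Real.pi ^ 2 / 6 - Real.log 2 ^ 2 := by
  have hcont : ContinuousOn
      (fun x : ℝ => dilog x + dilog (1 - x) + Real.log x * Real.log (1 - x))
      (Set.Icc 0 (1 / 2)) := by
    refine ContinuousOn.add (ContinuousOn.add ?_ ?_) continuousOn_log_mul_log_one_sub
    · exact continuousOn_dilog.mono (Set.Icc_subset_Icc le_rfl (by norm_num))
    · refine continuousOn_dilog.comp (by fun_prop) ?_
      rintro x ⟨h0, h1⟩
      constructor <;> linarith
  obtain ⟨c, -, hc⟩ := exists_hasDerivAt_eq_slope _ (fun _ => 0) (by norm_num) hcont (by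
    rintro x ⟨h0, h1⟩
    have e1 : x ≠ 0 := h0.ne'
    have e2 : 1 - x ≠ 0 := by linarith
    have hsub : HasDerivAt (fun x : ℝ => 1 - x) (-1) x := by
      simpa using (hasDerivAt_id x).const_sub 1
    have d1 := hasDerivAt_dilog h0 (by linarith)
    have d2 := (hasDerivAt_dilog (y := 1 - x) (by linarith) (by linarith)).comp x hsub
    have d3 := (Real.hasDerivAt_log e1).mul (hsub.log e2)
    refine ((d1.add d2).add d3).congr_deriv ?_
    simp only [sub_sub_cancel]
    field_simp
    ring)
  have hl : Real.log (1 / 2) = -Real.log 2 := by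
    rw [one_div, Real.log_inv]
  have e : (1 : ℝ) - 1 / 2 = 1 / 2 := by norm_num
  simp only [e, hl, sub_zero, Real.log_zero, zero_mul, dilog_zero, dilog_one] at hc
  linarith

/-! ### The limit density and its primitive -/

/-- The function `log² (1 + 1/x)`, for `x > 0`. -/
noncomputable def logSq (x : ℝ) : ℝ := (Real.log (1 + x) - Real.log x) ^ 2

/-- A primitive of `logSq` on `(0, ∞)`. -/
noncomputable def logSqPrim (x : ℝ) : ℝ := x * logSq x - 2 * dilog (1 / (1 + x))

lemma log_one_add_sub_log_nonneg {x : ℝ} (hx : 0 < x) :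
    0 ≤ Real.log (1 + x) - Real.log x :=
  sub_nonneg.2 (Real.log_le_log hx (by linarith))

lemma logSq_anti {x y : ℝ} (hx : 0 < x) (hxy : x ≤ y) : logSq y ≤ logSq x := by
  have hy : 0 < y := hx.trans_le hxy
  unfold logSq
  refine pow_le_pow_left₀ (log_one_add_sub_log_nonneg hy) ?_ 2
  rw [← Real.log_div (by positivity) hy.ne', ← Real.log_div (by positivity) hx.ne']
  refine Real.log_le_log (by positivity) ?_
  rw [div_le_div_iff₀ hy hx]
  nlinarith

lemma hasDerivAt_logSqPrim {x : ℝ} (hx : 0 < x) : HasDerivAt logSqPrim (logSq x) x := by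
  have e1 : 1 + x ≠ 0 := by positivity
  have hadd : HasDerivAt (fun x : ℝ => 1 + x) 1 x := by
    simpa using (hasDerivAt_id x).const_add 1
  have hd : HasDerivAt (fun x : ℝ => 1 / (1 + x)) (-1 / (1 + x) ^ 2) x := by
    simpa [Pi.inv_def] using hadd.inv e1
  have hy0 : 0 < 1 / (1 + x) := by positivity
  have hy1 : 1 / (1 + x) < 1 := by
    rw [div_lt_one (by positivity)]
    linarith
  have d1 := (hasDerivAt_id x).mul (((hadd.log e1).sub (Real.hasDerivAt_log hx.ne')).pow 2)
  have d2 := ((hasDerivAt_dilog hy0 hy1).comp x hd).const_mul 2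
  refine (d1.sub d2).congr_deriv ?_
  have e3 : 1 - 1 / (1 + x) = x / (1 + x) := by
    field_simp
    ring
  rw [e3, Real.log_div hx.ne' e1]
  simp only [logSq, id, Pi.sub_apply, Pi.pow_apply]
  field_simp
  ring

lemma continuousOn_logSqPrim : ContinuousOn logSqPrim (Set.Ici 0) := by
  intro x hx
  rcases (Set.mem_Ici.1 hx).eq_or_lt with rfl | hx
  · have h1 : ContinuousWithinAt (fun x : ℝ => x * logSq x) (Set.Ici 0) 0 := by
      rw [← continuousWithinAt_Ioi_iff_Ici]
      have ha := tendsto_log_mul_rpow_nhdsGT_zero (r := 1 / 2) (by norm_num)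
      have hb : Tendsto (fun x : ℝ => Real.log (1 + x) * x ^ (1 / 2 : ℝ))
          (nhdsWithin 0 (Set.Ioi 0)) (nhds 0) := by
        have : ContinuousAt (fun x : ℝ => Real.log (1 + x) * x ^ (1 / 2 : ℝ)) 0 := by
          refine ContinuousAt.mul ?_ (Real.continuousAt_rpow_const _ _ (Or.inr (by norm_num)))
          exact ContinuousAt.log (by fun_prop) (by norm_num)
        simpa using this.tendsto.mono_left nhdsWithin_le_nhds
      have hc := (hb.sub ha).pow 2
      unfold ContinuousWithinAt
      simp only [zero_mul]
      simp only [sub_zero, ne_eq, OfNat.ofNat_ne_zero, not_false_eq_true, zero_pow] at hc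
      refine hc.congr' ?_
      filter_upwards [self_mem_nhdsWithin] with x hx
      have hx : 0 < x := hx
      have hsq : (x ^ (1 / 2 : ℝ)) ^ 2 = x := by
        rw [← Real.sqrt_eq_rpow, Real.sq_sqrt hx.le]
      unfold logSq
      rw [← sub_mul, mul_pow, hsq, mul_comm]
    refine h1.sub (ContinuousWithinAt.mul continuousWithinAt_const ?_)
    refine ContinuousWithinAt.comp (t := Set.Icc 0 1) (g := dilog) (f := fun x => 1 / (1 + x))
      (continuousOn_dilog _ (by simp)) ?_ ?_
    · exact ContinuousAt.continuousWithinAt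
        (continuousAt_const.div (by fun_prop) (by norm_num))
    · intro x hx
      have hx : 0 ≤ x := hx
      refine ⟨by positivity, ?_⟩
      rw [div_le_one (by positivity)]
      linarith
  · exact (hasDerivAt_logSqPrim hx).continuousAt.continuousWithinAt

lemma logSqPrim_one_sub_zero :
    logSqPrim 1 - logSqPrim 0 = 2 * Real.log 2 ^ 2 + Real.pi ^ 2 / 6 := by
  have h := dilog_half
  have e : (1 : ℝ) + 1 = 2 := by norm_num
  simp only [logSqPrim, logSq, e, add_zero, div_one, dilog_one, Real.log_one, sub_zero, zero_mul]
  linarith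

lemma exists_logSq_eq {x y : ℝ} (hx : 0 ≤ x) (hxy : x < y) :
    ∃ c ∈ Set.Ioo x y, logSqPrim y - logSqPrim x = logSq c * (y - x) := by
  obtain ⟨c, hc, h⟩ := exists_hasDerivAt_eq_slope logSqPrim logSq hxy
    (continuousOn_logSqPrim.mono fun z hz => hx.trans hz.1)
    (fun z hz => hasDerivAt_logSqPrim (hx.trans_lt hz.1))
  refine ⟨c, hc, ?_⟩
  rw [h, div_mul_cancel₀ _ (sub_ne_zero.2 hxy.ne')]

lemma le_logSqPrim_sub {x y : ℝ} (hx : 0 ≤ x) (hxy : x < y) :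
    logSq y * (y - x) ≤ logSqPrim y - logSqPrim x := by
  obtain ⟨c, hc, h⟩ := exists_logSq_eq hx hxy
  rw [h]
  exact mul_le_mul_of_nonneg_right (logSq_anti (hx.trans_lt hc.1) hc.2.le) (by linarith)

lemma logSqPrim_sub_le {x y : ℝ} (hx : 0 < x) (hxy : x < y) :
    logSqPrim y - logSqPrim x ≤ logSq x * (y - x) := by
  obtain ⟨c, hc, h⟩ := exists_logSq_eq hx.le hxy
  rw [h]
  exact mul_le_mul_of_nonneg_right (logSq_anti hx hc.1.le) (by linarith)

/-! ### Comparison of harmonic sums with logarithms -/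

lemma log_sub_log_le_sum (N : ℕ) {t : ℝ} (ht : 0 < t) :
    Real.log (N + t) - Real.log t ≤ ∑ q ∈ Finset.range N, (1 : ℝ) / (q + t) := by
  have h := Finset.sum_range_sub (fun q : ℕ => Real.log (q + t)) N
  simp only [Nat.cast_zero, zero_add] at h
  rw [← h]
  refine Finset.sum_le_sum fun q _ => ?_
  have hq : (0 : ℝ) < q + t := by positivity
  push_cast
  rw [← Real.log_div (by positivity) hq.ne']
  refine (Real.log_le_sub_one_of_pos (by positivity)).trans (le_of_eq ?_)
  field_simp
  ring

lemma sum_le_log_sub_log (N : ℕ) {t : ℝ} (ht : 0 < t) :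
    ∑ q ∈ Finset.range N, (1 : ℝ) / (q + (t + 1)) ≤ Real.log (N + t) - Real.log t := by
  have h := Finset.sum_range_sub (fun q : ℕ => Real.log (q + t)) N
  simp only [Nat.cast_zero, zero_add] at h
  rw [← h]
  refine Finset.sum_le_sum fun q _ => ?_
  have hq : (0 : ℝ) < q + t := by positivity
  push_cast
  rw [← Real.log_div (by positivity) hq.ne']
  refine (le_of_eq ?_).trans (Real.one_sub_inv_le_log_of_pos (by positivity))
  field_simp
  ring

lemma logSq_div {N t : ℝ} (hN : 0 < N) (ht : 0 < t) :
    logSq (t / N) = (Real.log (N + t) - Real.log t) ^ 2 := by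
  have e : 1 + t / N = (N + t) / N := by field_simp
  rw [logSq, e, Real.log_div (by positivity) hN.ne', Real.log_div ht.ne' hN.ne']
  congr 1
  ring

lemma le_sq_sum (N : ℕ) (hN : 0 < N) {t : ℝ} (ht : 0 < t) :
    N * (logSqPrim ((t + 1) / N) - logSqPrim (t / N)) ≤
      (∑ q ∈ Finset.range N, (1 : ℝ) / (q + t)) ^ 2 := by
  have hN' : (0 : ℝ) < N := by exact_mod_cast hN
  have h := logSqPrim_sub_le (x := t / N) (y := (t + 1) / N) (by positivity)
    (by gcongr; linarith)
  calc _ ≤ N * (logSq (t / N) * ((t + 1) / N - t / N)) := by gcongr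
    _ = logSq (t / N) := by field_simp; ring
    _ ≤ _ := by
      rw [logSq_div hN' ht]
      refine pow_le_pow_left₀ ?_ (log_sub_log_le_sum N ht) 2
      exact sub_nonneg.2 (Real.log_le_log ht (by linarith))

lemma sq_sum_le (N : ℕ) (hN : 0 < N) {t : ℝ} (ht : 0 ≤ t) :
    (∑ q ∈ Finset.range N, (1 : ℝ) / (q + (t + 1 + 1))) ^ 2 ≤
      N * (logSqPrim ((t + 1) / N) - logSqPrim (t / N)) := by
  have hN' : (0 : ℝ) < N := by exact_mod_cast hN
  have h := le_logSqPrim_sub (x := t / N) (y := (t + 1) / N) (by positivity)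
    (by gcongr; linarith)
  calc _ ≤ logSq ((t + 1) / N) := by
        rw [logSq_div hN' (by positivity)]
        exact pow_le_pow_left₀ (Finset.sum_nonneg fun q _ => by positivity)
          (sum_le_log_sub_log N (by positivity)) 2
    _ = N * (logSq ((t + 1) / N) * ((t + 1) / N - t / N)) := by field_simp; ring
    _ ≤ _ := by gcongr

/-! ### Two-sided bounds and the limit -/

lemma sum_lower (k : ℕ) :
    ((k : ℝ) + 2) * (logSqPrim 1 - logSqPrim (1 / ((k : ℝ) + 2))) ≤
      ∑ m ∈ Finset.range (k + 1),
        (∑ q ∈ Finset.range (k + 2), (1 : ℝ) / (q + ((m : ℝ) + 1))) ^ 2 := by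
  have hk : (k : ℝ) + 2 ≠ 0 := by positivity
  have h := Finset.sum_le_sum (s := Finset.range (k + 1)) fun m _ =>
    le_sq_sum (k + 2) (by omega) (t := (m : ℝ) + 1) (by positivity)
  have ht := Finset.sum_range_sub
    (fun m : ℕ => logSqPrim (((m : ℝ) + 1) / ((k + 2 : ℕ) : ℝ))) (k + 1)
  push_cast at h ht
  rw [← Finset.mul_sum, ht] at h
  have e : ((k : ℝ) + 1 + 1) / (k + 2) = 1 := by
    rw [div_eq_one_iff_eq hk]
    ring
  simpa [e] using h

lemma sum_upper (k : ℕ) :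
    ∑ m ∈ Finset.range (k + 1),
        (∑ q ∈ Finset.range (k + 2), (1 : ℝ) / (q + ((m : ℝ) + 1))) ^ 2 ≤
      ((k : ℝ) + 2) * (logSqPrim (k / ((k : ℝ) + 2)) - logSqPrim 0) +
        (1 + Real.log (k + 2)) ^ 2 := by
  rw [Finset.sum_range_succ']
  refine add_le_add ?_ ?_
  · have h := Finset.sum_le_sum (s := Finset.range k) fun m _ =>
      sq_sum_le (k + 2) (by omega) (t := (m : ℝ)) (by positivity)
    have ht := Finset.sum_range_sub (fun m : ℕ => logSqPrim ((m : ℝ) / ((k + 2 : ℕ) : ℝ))) k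
    push_cast at h ht ⊢
    rw [← Finset.mul_sum, ht] at h
    simpa using h
  · refine pow_le_pow_left₀ (Finset.sum_nonneg fun q _ => by positivity) ?_ 2
    rw [Finset.sum_range_succ']
    have h := sum_le_log_sub_log (k + 1) (t := 1) one_pos
    have e : ((k + 1 : ℕ) : ℝ) + 1 = k + 2 := by
      push_cast
      ring
    rw [e, Real.log_one, sub_zero] at h
    have e2 : ∑ q ∈ Finset.range (k + 1), (1 : ℝ) / (((q + 1 : ℕ) : ℝ) + (((0 : ℕ) : ℝ) + 1)) =
        ∑ q ∈ Finset.range (k + 1), (1 : ℝ) / (q + (1 + 1)) := by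
      refine Finset.sum_congr rfl fun q _ => ?_
      push_cast
      ring_nf
    rw [e2]
    norm_num at h ⊢
    linarith

lemma tendsto_sq_log_div :
    Tendsto (fun k : ℕ => (1 + Real.log ((k : ℝ) + 2)) ^ 2 / ((k : ℝ) + 2)) atTop (nhds 0) := by
  have h : Tendsto (fun x : ℝ => (1 + Real.log x) ^ 2 / x) atTop (nhds 0) := by
    have h0 : Tendsto (fun x : ℝ => 1 / x) atTop (nhds 0) := by
      simpa using tendsto_inv_atTop_zero (𝕜 := ℝ)
    have h1 := Real.isLittleO_log_id_atTop.tendsto_div_nhds_zero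
    have h2 := (Real.isLittleO_pow_log_id_atTop (n := 2)).tendsto_div_nhds_zero
    have h3 := (h0.add (h1.const_mul 2)).add h2
    simp only [mul_zero, add_zero, id] at h3
    refine h3.congr fun x => ?_
    ring
  exact h.comp (tendsto_atTop_add_const_right _ _ tendsto_natCast_atTop_atTop)

/-- `lim_{Λ→∞} (1/Λ) ∑_{m=1}^{Λ} (∑_{q=0}^{Λ} 1/(q+m))² = 2 (log 2)² + π²/6`. -/
theorem gw2_quadratic_counterterm_asymptotics :
    Tendsto (fun Λ : ℕ =>
        (1 / (Λ : ℝ)) *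
          ∑ m ∈ Finset.Icc 1 Λ, (∑ q ∈ Finset.range (Λ + 1), (1 : ℝ) / (q + m)) ^ 2)
      atTop (nhds (2 * (Real.log 2) ^ 2 + Real.pi ^ 2 / 6)) := by
  rw [← tendsto_add_atTop_iff_nat 1, ← logSqPrim_one_sub_zero]
  have hinv : Tendsto (fun k : ℕ => 1 / ((k : ℝ) + 2)) atTop (nhds 0) := by
    simpa [Function.comp_def] using (tendsto_inv_atTop_zero (𝕜 := ℝ)).comp
      (tendsto_atTop_add_const_right _ (2 : ℝ) tendsto_natCast_atTop_atTop)
  have hratio : Tendsto (fun k : ℕ => ((k : ℝ) + 2) / ((k : ℝ) + 1)) atTop (nhds 1) := by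
    have h := (tendsto_one_div_add_atTop_nhds_zero_nat (𝕜 := ℝ)).const_add 1
    rw [add_zero] at h
    refine h.congr fun k => ?_
    field_simp
    ring
  have hF0 : Tendsto (fun k : ℕ => logSqPrim (1 / ((k : ℝ) + 2))) atTop
      (nhds (logSqPrim 0)) :=
    (continuousOn_logSqPrim 0 (Set.mem_Ici.2 le_rfl)).tendsto.comp
      (tendsto_nhdsWithin_iff.2 ⟨hinv, Eventually.of_forall fun k => Set.mem_Ici.2 (by positivity)⟩)
  have hF1 : Tendsto (fun k : ℕ => logSqPrim ((k : ℝ) / ((k : ℝ) + 2))) atTop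
      (nhds (logSqPrim 1)) := by
    refine (hasDerivAt_logSqPrim one_pos).continuousAt.tendsto.comp ?_
    have h := (hinv.const_mul 2).const_sub 1
    rw [mul_zero, sub_zero] at h
    refine h.congr fun k => ?_
    field_simp
    ring
  have hlow := hratio.mul (hF0.const_sub (logSqPrim 1))
  have hupp := hratio.mul ((hF1.sub_const (logSqPrim 0)).add tendsto_sq_log_div)
  rw [one_mul] at hlow
  rw [one_mul, add_zero] at hupp
  have hsum : ∀ k : ℕ, ∑ m ∈ Finset.Icc 1 (k + 1),
      (∑ q ∈ Finset.range (k + 1 + 1), (1 : ℝ) / (q + m)) ^ 2 =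
      ∑ m ∈ Finset.range (k + 1),
        (∑ q ∈ Finset.range (k + 2), (1 : ℝ) / (q + ((m : ℝ) + 1))) ^ 2 := by
    intro k
    rw [← Finset.Ico_add_one_right_eq_Icc, Finset.sum_Ico_eq_sum_range]
    refine Finset.sum_congr rfl fun m _ => ?_
    push_cast
    simp only [add_comm (1 : ℝ)]
  refine tendsto_of_tendsto_of_tendsto_of_le_of_le hlow hupp (fun k => ?_) (fun k => ?_)
  · have hk : (0 : ℝ) < k + 1 := by positivity
    simp only [hsum, Nat.cast_add, Nat.cast_one]
    rw [one_div_mul_eq_div, div_mul_eq_mul_div]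
    exact div_le_div_of_nonneg_right (sum_lower k) hk.le
  · have hk : (0 : ℝ) < k + 1 := by positivity
    simp only [hsum, Nat.cast_add, Nat.cast_one]
    rw [one_div_mul_eq_div, div_mul_eq_mul_div]
    refine div_le_div_of_nonneg_right ((sum_upper k).trans (le_of_eq ?_)) hk.le
    field_simp
end

section
/- ∫_0^1 ( log((1+x)/x) )² dx = 2 (log 2)² + π²/6. -/
/-!
The integrand has an explicit antiderivative on `(0, 1)`. Writing
`D x = ∑ (-1)ⁿ xⁿ⁺¹ / (n+1)²` (that is, `-Li₂(-x)`), for which `D' x = log (1+x) / x`, the function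
`F x = x (log (1+x) - log x)² + log² (1+x) - 2 log x log (1+x) + 2 D x`
satisfies `F' x = (log ((1+x)/x))²`. It is continuous on `[0, 1]` with `F 0 = 0` and
`F 1 = 2 log² 2 + 2 D 1`, and `D 1 = π²/12` follows from `ζ(2) = π²/6` by separating even and odd
terms. Integrability of the integrand is automatic, since it is a nonnegative derivative of a
function continuous up to the boundary.
-/

open Set Filter Topology

namespace GW2

/-- The function `-Li₂(-x) = ∑ (-1)ⁿ xⁿ⁺¹ / (n+1)²`, a convergent series for `|x| ≤ 1`. -/
noncomputable def dilog (x : ℝ) : ℝ := ∑' n : ℕ, (-1) ^ n * x ^ (n + 1) / ((n : ℝ) + 1) ^ 2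

lemma hasSum_inv_succ_sq :
    HasSum (fun n : ℕ => 1 / ((n : ℝ) + 1) ^ 2) (Real.pi ^ 2 / 6) := by
  have h := (hasSum_nat_add_iff' 1).mpr hasSum_zeta_two
  simpa using h

lemma dilog_zero : dilog 0 = 0 := by simp [dilog]

lemma dilog_one : dilog 1 = Real.pi ^ 2 / 12 := by
  have hz := hasSum_inv_succ_sq
  have ho : HasSum (fun k : ℕ => 1 / (((2 * k + 1 : ℕ) : ℝ) + 1) ^ 2) (Real.pi ^ 2 / 24) := by
    have h := hz.mul_left (1 / 4)
    rw [show 1 / 4 * (Real.pi ^ 2 / 6) = Real.pi ^ 2 / 24 by ring] at h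
    refine h.congr_fun fun k => ?_
    push_cast
    field_simp
    ring
  have hs : Summable (fun k : ℕ => 1 / (((2 * k : ℕ) : ℝ) + 1) ^ 2) :=
    hz.summable.comp_injective (i := fun k : ℕ => 2 * k) fun a b h => by simpa using h
  have he := hs.hasSum
  have hsum := (HasSum.even_add_odd (f := fun n : ℕ => 1 / ((n : ℝ) + 1) ^ 2) he ho).unique hz
  have halt : HasSum (fun n : ℕ => (-1 : ℝ) ^ n * 1 ^ (n + 1) / ((n : ℝ) + 1) ^ 2)
      ((∑' k : ℕ, 1 / (((2 * k : ℕ) : ℝ) + 1) ^ 2) + -(Real.pi ^ 2 / 24)) := by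
    apply HasSum.even_add_odd
    · simpa using he
    · refine ho.neg.congr_fun fun k => ?_
      simp [pow_succ, pow_mul, neg_div]
  rw [dilog, halt.tsum_eq]
  linarith

lemma continuousOn_dilog : ContinuousOn dilog (Icc 0 1) := by
  refine continuousOn_tsum (u := fun n : ℕ => 1 / ((n : ℝ) + 1) ^ 2) (fun n => by fun_prop)
    hasSum_inv_succ_sq.summable ?_
  intro n x hx
  rw [norm_div, norm_mul, norm_pow, norm_pow, norm_pow]
  simp only [norm_neg, norm_one, one_pow, one_mul, Real.norm_eq_abs, abs_of_nonneg hx.1,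
    sq_abs]
  gcongr
  exact pow_le_one₀ hx.1 hx.2

lemma hasDerivAt_dilog {x : ℝ} (hx : x ∈ Ioo (0 : ℝ) 1) :
    HasDerivAt dilog (Real.log (1 + x) / x) x := by
  obtain ⟨r, hxr, hr⟩ := exists_between hx.2
  have hr0 : 0 < r := hx.1.trans hxr
  have key : HasDerivAt dilog (∑' n : ℕ, (-1) ^ n * x ^ n / ((n : ℝ) + 1)) x := by
    refine hasDerivAt_tsum_of_isPreconnected (u := fun n : ℕ => r ^ n) (t := Ioo 0 r)
      (g := fun (n : ℕ) (y : ℝ) => (-1) ^ n * y ^ (n + 1) / ((n : ℝ) + 1) ^ 2)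
      (g' := fun (n : ℕ) (y : ℝ) => (-1) ^ n * y ^ n / ((n : ℝ) + 1))
      (summable_geometric_of_lt_one hr0.le hr) isOpen_Ioo isPreconnected_Ioo ?_ ?_
      (y₀ := x) ⟨hx.1, hxr⟩ ?_ ⟨hx.1, hxr⟩
    · intro n y _
      have := ((hasDerivAt_pow (n + 1) y).const_mul ((-1 : ℝ) ^ n)).div_const (((n : ℝ) + 1) ^ 2)
      refine this.congr_deriv ?_
      push_cast
      field_simp
    · intro n y hy
      rw [norm_div, norm_mul, norm_pow, norm_pow]
      simp only [norm_neg, norm_one, one_pow, one_mul, Real.norm_eq_abs, abs_of_nonneg hy.1.le]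
      rw [abs_of_nonneg (by positivity)]
      calc y ^ n / ((n : ℝ) + 1) ≤ y ^ n :=
            div_le_self (pow_nonneg hy.1.le n) (by simp)
        _ ≤ r ^ n := pow_le_pow_left₀ hy.1.le hy.2.le n
    · refine Summable.of_norm_bounded hasSum_inv_succ_sq.summable fun n => ?_
      rw [norm_div, norm_mul, norm_pow, norm_pow, norm_pow]
      simp only [norm_neg, norm_one, one_pow, one_mul, Real.norm_eq_abs, abs_of_nonneg hx.1.le,
        sq_abs]
      gcongr
      exact pow_le_one₀ hx.1.le hx.2.le
  have hlog := Real.hasSum_pow_div_log_of_abs_lt_one (x := -x)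
    (by rw [abs_neg, abs_of_pos hx.1]; exact hx.2)
  have hsum : HasSum (fun n : ℕ => (-1) ^ n * x ^ n / ((n : ℝ) + 1)) (Real.log (1 + x) / x) := by
    have hx0 := hx.1.ne'
    have h := hlog.mul_left (-1 / x)
    rw [sub_neg_eq_add, show -1 / x * -Real.log (1 + x) = Real.log (1 + x) / x by ring] at h
    refine h.congr_fun fun n => ?_
    rw [neg_pow x (n + 1)]
    field_simp
    ring
  rwa [hsum.tsum_eq] at key

/-- The antiderivative of `(log ((1+x)/x))²`. -/
noncomputable def F (x : ℝ) : ℝ :=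
  x * (Real.log (1 + x) - Real.log x) ^ 2 + Real.log (1 + x) ^ 2
    - 2 * (Real.log x * Real.log (1 + x)) + 2 * dilog x

lemma hasDerivAt_F {x : ℝ} (hx : x ∈ Ioo (0 : ℝ) 1) :
    HasDerivAt F (Real.log ((1 + x) / x) ^ 2) x := by
  have hx0 : x ≠ 0 := hx.1.ne'
  have hx1 : 1 + x ≠ 0 := by linarith [hx.1]
  have h1 : HasDerivAt (fun y : ℝ => Real.log (1 + y)) (1 / (1 + x)) x :=
    ((hasDerivAt_id x).const_add 1).log hx1
  have h2 := Real.hasDerivAt_log hx0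
  have h := ((((hasDerivAt_id x).mul ((h1.sub h2).pow 2)).add (h1.pow 2)).sub
    ((h2.mul h1).const_mul 2)).add ((hasDerivAt_dilog hx).const_mul 2)
  refine h.congr_deriv ?_
  rw [Real.log_div hx1 hx0]
  simp
  field_simp
  ring

lemma continuousOn_log_one_add : ContinuousOn (fun x : ℝ => Real.log (1 + x)) (Icc 0 1) :=
  ContinuousOn.log (by fun_prop) fun x hx => by linarith [hx.1]

lemma continuousOn_mul_log_sq : ContinuousOn (fun x : ℝ => x * Real.log x ^ 2) (Icc 0 1) := by
  -- `x log² x = 4 (√x log √x)²`, and `y log y` is continuous everywhere.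
  have h : Continuous fun x : ℝ => 4 * (√x * Real.log √x) ^ 2 :=
    ((Real.continuous_mul_log.comp Real.continuous_sqrt).pow 2).const_mul 4
  refine h.continuousOn.congr fun x hx => ?_
  simp only
  rw [Real.log_sqrt hx.1, mul_pow, Real.sq_sqrt hx.1]
  ring

lemma continuousOn_log_mul_log :
    ContinuousOn (fun x : ℝ => Real.log x * Real.log (1 + x)) (Icc 0 1) := by
  intro x hx
  rcases hx.1.eq_or_lt with rfl | hpos
  · -- Near `0` the product is dominated by `|x log x|`.
    have hlim : Tendsto (fun x : ℝ => |x * Real.log x|) (𝓝[Icc 0 1] 0) (𝓝 0) := by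
      have := (Real.continuous_mul_log.abs.tendsto 0).mono_left (nhdsWithin_le_nhds (s := Icc 0 1))
      simpa using this
    have : Tendsto (fun x : ℝ => Real.log x * Real.log (1 + x)) (𝓝[Icc 0 1] 0) (𝓝 0) := by
      refine squeeze_zero_norm' ?_ hlim
      filter_upwards [self_mem_nhdsWithin] with y hy
      have h0 : 0 ≤ Real.log (1 + y) := Real.log_nonneg (by linarith [hy.1])
      have h1 : Real.log (1 + y) ≤ y := by
        linarith [Real.log_le_sub_one_of_pos (show 0 < 1 + y by linarith [hy.1])]
      rw [Real.norm_eq_abs, abs_mul, abs_mul, abs_of_nonneg h0, abs_of_nonneg hy.1, mul_comm]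
      gcongr
    simpa [ContinuousWithinAt] using this
  · exact (Real.continuousAt_log hpos.ne').continuousWithinAt.mul (continuousOn_log_one_add x hx)

lemma continuousOn_F : ContinuousOn F (Icc 0 1) := by
  have h1 := continuousOn_log_one_add
  have h2 := continuousOn_mul_log_sq
  have h3 := continuousOn_log_mul_log
  have h4 := continuousOn_dilog
  have h := ((((continuousOn_id.mul (h1.pow 2)).sub
    ((continuousOn_id.mul h3).const_mul 2)).add h2).add (h1.pow 2)).sub (h3.const_mul 2)
      |>.add (h4.const_mul 2)
  refine h.congr fun x _ => ?_
  simp [F]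
  ring

end GW2

/-- `∫_0^1 (log((1+x)/x))² dx = 2 (log 2)² + π²/6`. -/
theorem gw2_counterterm_integral :
    ∫ x in (0 : ℝ)..1, (Real.log ((1 + x) / x)) ^ 2
      = 2 * (Real.log 2) ^ 2 + Real.pi ^ 2 / 6 := by
  have hint : IntervalIntegrable (fun x : ℝ => Real.log ((1 + x) / x) ^ 2)
      MeasureTheory.volume 0 1 := by
    rw [intervalIntegrable_iff_integrableOn_Ioc_of_le zero_le_one]
    exact intervalIntegral.integrableOn_deriv_of_nonneg GW2.continuousOn_F
      (fun x hx => GW2.hasDerivAt_F hx) (fun x _ => sq_nonneg _)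
  rw [intervalIntegral.integral_eq_sub_of_hasDerivAt_of_le zero_le_one GW2.continuousOn_F
    (fun x hx => GW2.hasDerivAt_F hx) hint]
  simp only [GW2.F, GW2.dilog_zero, GW2.dilog_one]
  norm_num
  ring
end

section
/- Let T be a finite tree on a vertex set V (a connected acyclic simple graph) and let w assign to each edge ℓ of T a real number w_ℓ ∈ [0,1]. Define the symmetric matrix W on V × V by W(v,v) = 1 and, for v ≠ v', W(v,v') = the minimum of w_ℓ over the edges ℓ on the unique path in T from v to v'. Then W is positive semidefinite. -/
/-!
The proof is a layer-cake decomposition. For a threshold `t ≤ 1`, `t ≤ W v v'` holds exactly when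
`v` and `v'` are joined in the subgraph of `G` keeping only the edges of weight at least `t`
(`le_iff_reachable_threshold`). Hence the indicator matrix of `{t ≤ W}` is the indicator of an
equivalence relation on `V`, whose quadratic form is the sum over classes `C` of
`(∑ v ∈ C, x v) ^ 2` (`sum_class_indicator_nonneg`). Since the entries of `W` lie in `[0, 1]`,
`W v v'` is the integral over `t ∈ [0, 1]` of that indicator, so the quadratic form of `W` is an
integral of nonnegative functions.
-/

lemma le_foldr_min_iff {t b : ℝ} (l : List ℝ) :
    t ≤ l.foldr min b ↔ t ≤ b ∧ ∀ a ∈ l, t ≤ a := by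
  induction l with
  | nil => simp
  | cons a l ih => simp only [List.foldr_cons, le_min_iff, ih, List.forall_mem_cons]; tauto

/-- The subgraph of `G` that keeps only the edges of weight at least `t`. -/
def thresholdGraph {V : Type*} (G : SimpleGraph V) (w : Sym2 V → ℝ) (t : ℝ) : SimpleGraph V :=
  G.deleteEdges {e | w e < t}

lemma mem_edgeSet_thresholdGraph {V : Type*} {G : SimpleGraph V} {w : Sym2 V → ℝ} {t : ℝ}
    {e : Sym2 V} : e ∈ (thresholdGraph G w t).edgeSet ↔ e ∈ G.edgeSet ∧ t ≤ w e := by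
  simp [thresholdGraph, SimpleGraph.edgeSet_deleteEdges]

/-- Superlevel sets of `W` are the reachability relations of the threshold graphs, because a path
of `G` has minimal weight at least `t` exactly when it lies in the threshold graph. -/
lemma le_iff_reachable_threshold {V : Type*} {G : SimpleGraph V} (hconn : G.Connected)
    {w : Sym2 V → ℝ} {W : Matrix V V ℝ} (hWdiag : ∀ v, W v v = 1)
    (hWoff : ∀ v v' : V, v ≠ v' → ∀ p : G.Walk v v', p.IsPath →
      W v v' = (p.edges.map w).foldr min 1)
    {t : ℝ} (ht : t ≤ 1) (v v' : V) :
    t ≤ W v v' ↔ (thresholdGraph G w t).Reachable v v' := by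
  classical
  by_cases h : v = v'
  · subst h
    simp [hWdiag, ht]
  constructor
  · intro hle
    obtain ⟨p, hp⟩ := (hconn v v').exists_isPath
    rw [hWoff v v' h p hp, le_foldr_min_iff] at hle
    refine ⟨p.transfer _ fun e he => mem_edgeSet_thresholdGraph.2
      ⟨p.edges_subset_edgeSet he, hle.2 _ (List.mem_map_of_mem he)⟩⟩
  · intro hr
    obtain ⟨q, hq⟩ := hr.exists_isPath
    have hqG : ∀ e ∈ q.edges, e ∈ G.edgeSet := fun e he =>
      (mem_edgeSet_thresholdGraph.1 (q.edges_subset_edgeSet he)).1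
    rw [hWoff v v' h (q.transfer G hqG) (hq.transfer hqG), le_foldr_min_iff]
    refine ⟨ht, fun a ha => ?_⟩
    obtain ⟨e, he, rfl⟩ := List.mem_map.1 ha
    rw [SimpleGraph.Walk.edges_transfer] at he
    exact (mem_edgeSet_thresholdGraph.1 (q.edges_subset_edgeSet he)).2

/-- The classes of the equivalence relation are the fibres of `c`; the quadratic form of its
indicator matrix is a sum of squares over those fibres. -/
lemma sum_class_indicator_nonneg {V C : Type*} [Fintype V] [Fintype C] [DecidableEq C]
    (c : V → C) (x : V → ℝ) :
    0 ≤ ∑ v, ∑ v', x v * x v' * (if c v = c v' then 1 else 0) := by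
  have key : ∑ v, ∑ v', x v * x v' * (if c v = c v' then 1 else 0)
      = ∑ k, (∑ v, if c v = k then x v else 0) ^ 2 := by
    simp_rw [sq, Finset.sum_mul_sum]
    conv_rhs => rw [Finset.sum_comm]
    refine Finset.sum_congr rfl fun v _ => ?_
    rw [Finset.sum_comm]
    refine Finset.sum_congr rfl fun v' _ => ?_
    simp [ite_mul, eq_comm]
  rw [key]
  positivity

lemma integral_indicator_Iic_eq {a : ℝ} (ha : a ∈ Set.Icc (0 : ℝ) 1) :
    ∫ t in (0 : ℝ)..1, Set.indicator {t | t ≤ a} (fun _ => (1 : ℝ)) t = a := by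
  rw [intervalIntegral.integral_indicator ha]
  simp

/-- **BKAR covariance is positive semidefinite.** Let `T` be a finite tree on a vertex
set `V` (a connected acyclic simple graph) with edge weights `w ℓ ∈ [0,1]`. Define the
symmetric matrix `W` by `W v v = 1` and, for `v ≠ v'`, `W v v' =` the minimum of the
weights `w ℓ` over the edges `ℓ` of the unique path in `T` from `v` to `v'` (here
realized as `foldr min 1` over the edge list of any path from `v` to `v'`, which for
weights in `[0,1]` is that minimum). Then `W` is positive semidefinite. -/
theorem gw2_bkar_covariance_posSemidef {V : Type*} [Fintype V] [DecidableEq V]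
    (G : SimpleGraph V) (hconn : G.Connected) (hacyclic : G.IsAcyclic)
    (w : Sym2 V → ℝ) (hw : ∀ e ∈ G.edgeSet, w e ∈ Set.Icc (0 : ℝ) 1)
    (W : Matrix V V ℝ)
    (hWdiag : ∀ v, W v v = 1)
    (hWoff : ∀ v v' : V, v ≠ v' → ∀ p : G.Walk v v', p.IsPath →
      W v v' = (p.edges.map w).foldr min 1) :
    W.PosSemidef := by
  classical
  have hlevel := fun {t : ℝ} (ht : t ≤ 1) (v v' : V) =>
    le_iff_reachable_threshold hconn hWdiag hWoff ht v v'
  have hW01 : ∀ v v', W v v' ∈ Set.Icc (0 : ℝ) 1 := by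
    intro v v'
    by_cases h : v = v'
    · subst h
      simp [hWdiag]
    obtain ⟨p, hp⟩ := (hconn v v').exists_isPath
    rw [hWoff v v' h p hp]
    refine ⟨(le_foldr_min_iff _).2 ⟨zero_le_one, fun a ha => ?_⟩,
      ((le_foldr_min_iff _).1 le_rfl).1⟩
    obtain ⟨e, he, rfl⟩ := List.mem_map.1 ha
    exact (hw e (p.edges_subset_edgeSet he)).1
  have hle : ∀ v v', W v v' ≤ W v' v := fun v v' =>
    (hlevel (hW01 v v').2 v' v).2 ((hlevel (hW01 v v').2 v v').1 le_rfl).symm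
  refine Matrix.PosSemidef.of_dotProduct_mulVec_nonneg
    (Matrix.IsHermitian.ext fun v v' => le_antisymm (hle v' v) (hle v v')) fun x => ?_
  have hint : ∀ v v', IntervalIntegrable
      (fun t => x v * x v' * Set.indicator {t | t ≤ W v v'} (fun _ => (1 : ℝ)) t)
      MeasureTheory.volume 0 1 := by
    intro v v'
    refine IntervalIntegrable.const_mul ?_ _
    rw [intervalIntegrable_iff, Set.uIoc_of_le zero_le_one]
    exact (MeasureTheory.integrable_const (1 : ℝ)).indicator measurableSet_Iic
  have hint_row : ∀ v, IntervalIntegrable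
      (fun t => ∑ v', x v * x v' * Set.indicator {t | t ≤ W v v'} (fun _ => (1 : ℝ)) t)
      MeasureTheory.volume 0 1 := by
    intro v
    simpa only [Finset.sum_fn] using
      IntervalIntegrable.sum Finset.univ fun v' _ => hint v v'
  have hform : star x ⬝ᵥ W.mulVec x = ∫ t in (0 : ℝ)..1, ∑ v, ∑ v',
      x v * x v' * Set.indicator {t | t ≤ W v v'} (fun _ => (1 : ℝ)) t := by
    rw [intervalIntegral.integral_finsetSum fun v _ =>
      hint_row v]
    simp only [dotProduct, Matrix.mulVec, Finset.mul_sum, star_trivial]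
    refine Finset.sum_congr rfl fun v _ => ?_
    rw [intervalIntegral.integral_finsetSum fun v' _ => hint v v']
    refine Finset.sum_congr rfl fun v' _ => ?_
    rw [intervalIntegral.integral_const_mul, integral_indicator_Iic_eq (hW01 v v')]
    ring
  rw [hform]
  refine intervalIntegral.integral_nonneg zero_le_one fun t ht => ?_
  have := Fintype.ofFinite (thresholdGraph G w t).ConnectedComponent
  refine (sum_class_indicator_nonneg (thresholdGraph G w t).connectedComponentMk x).trans_eq ?_
  refine Finset.sum_congr rfl fun v _ => Finset.sum_congr rfl fun v' _ => ?_
  simp only [Set.indicator_apply, Set.mem_ofPred_eq, hlevel ht.2, SimpleGraph.ConnectedComponent.eq]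
end
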